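/- For all i, j, h ∈ {0,1,…,d}: A_h G_{ij} = k_h G_{ij} if h < i; A_h G_{ij} = k_i (G_{0j} + G_{1j} + ⋯ + G_{i−1,j}) + (k_i − (k_0 + k_1 + ⋯ + k_{i−1})) G_{ij} if h = i; and A_h G_{ij} = k_i G_{hj} if h > i. -/

import Mathlib

open Finset Matrix

/-- Vertex set of the wreath product `K_{n 0} ≀ K_{n 1} ≀ ⋯ ≀ K_{n (d-1)}`
(paper indices `n_1, …, n_d` correspond to `n 0, …, n (d-1)`). -/
abbrev Vx (d : ℕ) (n : ℕ → ℕ) : Type := (i : Fin d) → Fin (n i)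

/-- `delta x y = 0` if `x = y`; otherwise `delta x y` is the largest (1-based)
index at which `x` and `y` differ. -/
def delta {d : ℕ} {n : ℕ → ℕ} (x y : Vx d n) : ℕ :=
  (Finset.univ.filter fun i => x i ≠ y i).sup fun i => (i : ℕ) + 1

/-- The `i`-th adjacency matrix of the wreath product: `(A i) x y = 1` iff `delta x y = i`. -/
noncomputable def A (d : ℕ) (n : ℕ → ℕ) (i : ℕ) : Matrix (Vx d n) (Vx d n) ℂ :=
  Matrix.of fun x y => if delta x y = i then 1 else 0

/-- The valencies: `k 0 = 1` and, for `1 ≤ i`, `k i = n_1 ⋯ n_{i-1} (n_i - 1)`,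
i.e. `k i = n 0 ⋯ n (i-2) * (n (i-1) - 1)`. -/
def k (n : ℕ → ℕ) (i : ℕ) : ℕ :=
  if i = 0 then 1 else (∏ j ∈ Finset.range (i - 1), n j) * (n (i - 1) - 1)

/-- The dual idempotent `E_i*` with respect to the base point `x₀`: the diagonal
0-1 matrix with `(E_i*)_{yy} = 1` iff `delta x₀ y = i`. -/
noncomputable def Es {d : ℕ} {n : ℕ → ℕ} (x₀ : Vx d n) (i : ℕ) :
    Matrix (Vx d n) (Vx d n) ℂ :=
  Matrix.of fun y z => if y = z ∧ delta x₀ y = i then 1 else 0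

/-- The all-ones matrix `J`. -/
noncomputable def Jm (d : ℕ) (n : ℕ → ℕ) : Matrix (Vx d n) (Vx d n) ℂ :=
  Matrix.of fun _ _ => 1

/-- The matrices `G i j`. -/
noncomputable def G {d : ℕ} {n : ℕ → ℕ} (x₀ : Vx d n) (i j : ℕ) :
    Matrix (Vx d n) (Vx d n) ℂ :=
  if i < j then ((k n j : ℂ))⁻¹ • (Es x₀ i * A d n j * Es x₀ j)
  else if j < i then ((k n j : ℂ))⁻¹ • (Es x₀ i * A d n i * Es x₀ j)
  else ((k n i : ℂ))⁻¹ • (Es x₀ i * Jm d n * Es x₀ i)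

/-- The span `U` of the matrices `G i j`, `i, j ∈ [d]`. -/
noncomputable def Uspan {d : ℕ} {n : ℕ → ℕ} (x₀ : Vx d n) :
    Submodule ℂ (Matrix (Vx d n) (Vx d n) ℂ) :=
  Submodule.span ℂ (Set.range fun p : Fin (d + 1) × Fin (d + 1) => G x₀ p.1 p.2)

/-- The Terwilliger algebra of the wreath product with respect to `x₀`. -/
noncomputable def Ter {d : ℕ} {n : ℕ → ℕ} (x₀ : Vx d n) :
    Subalgebra ℂ (Matrix (Vx d n) (Vx d n) ℂ) :=
  Algebra.adjoin ℂ
    ((Set.range fun i : Fin (d + 1) => A d n i) ∪ (Set.range fun i : Fin (d + 1) => Es x₀ i))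

/-- The matrices `F i h`, for `1 ≤ i ≤ d` and `0 ≤ h ≤ i - 1`. -/
noncomputable def F {d : ℕ} {n : ℕ → ℕ} (x₀ : Vx d n) (i h : ℕ) :
    Matrix (Vx d n) (Vx d n) ℂ :=
  if h < i - 1 then
    (∑ j ∈ Finset.range (h + 1), (k n j : ℂ))⁻¹ •
        (∑ j ∈ Finset.range (h + 1), Es x₀ i * A d n j * Es x₀ i)
      - (∑ j ∈ Finset.range (h + 2), (k n j : ℂ))⁻¹ •
          (∑ j ∈ Finset.range (h + 2), Es x₀ i * A d n j * Es x₀ i)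
  else
    (∑ j ∈ Finset.range i, (k n j : ℂ))⁻¹ •
        (∑ j ∈ Finset.range i, Es x₀ i * A d n j * Es x₀ i)
      - G x₀ i i


theorem dl_le_iff {d : ℕ} {n : ℕ → ℕ} (x y : Vx d n) (m : ℕ) :
    delta x y ≤ m ↔ ∀ i : Fin d, m ≤ i → x i = y i := by
  unfold delta
  rw [Finset.sup_le_iff]
  constructor
  · intro H i hi
    by_contra hne
    have := H i (by simp [hne])
    omega
  · intro H i hi
    have hne : x i ≠ y i := by simpa using hi
    by_contra hlt
    exact hne (H i (by omega))

theorem dl_comm {d : ℕ} {n : ℕ → ℕ} (x y : Vx d n) : delta x y = delta y x := by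
  unfold delta
  simp only [ne_comm]

theorem dl_tri {d : ℕ} {n : ℕ → ℕ} (x y z : Vx d n) :
    delta x z ≤ max (delta x y) (delta y z) := by
  rw [dl_le_iff]
  intro i hi
  exact ((dl_le_iff x y _).1 le_rfl i (le_trans (le_max_left _ _) hi)).trans
    ((dl_le_iff y z _).1 le_rfl i (le_trans (le_max_right _ _) hi))

theorem dl_iso {d : ℕ} {n : ℕ → ℕ} (x y z : Vx d n) :
    delta x z ≤ max (delta x y) (delta y z) ∧ delta x y ≤ max (delta x z) (delta y z) ∧
    delta y z ≤ max (delta x y) (delta x z) := by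
  refine ⟨dl_tri x y z, ?_, ?_⟩
  · have := dl_tri x z y; rwa [dl_comm z y] at this
  · have := dl_tri y x z; rwa [dl_comm y x] at this

theorem card_le {d : ℕ} {n : ℕ → ℕ} (y : Vx d n) (i : ℕ) (hi : i ≤ d) :
    (univ.filter fun w : Vx d n => delta y w ≤ i).card = ∏ j ∈ range i, n j := by
  have : (univ.filter fun w : Vx d n => delta y w ≤ i) =
      Fintype.piFinset (fun j : Fin d => if (j : ℕ) < i then univ else {y j}) := by
    ext w
    simp only [mem_filter, mem_univ, true_and, dl_le_iff, Fintype.mem_piFinset]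
    refine forall_congr' fun j => ?_
    split_ifs with hj
    · simp; omega
    · simp [not_lt.1 hj, eq_comm]
  rw [this, Fintype.card_piFinset]
  have h2 : ∀ j : Fin d, (if (j : ℕ) < i then (univ : Finset (Fin (n j))) else {y j}).card
      = (fun j : ℕ => if j < i then n j else 1) j := by
    intro j
    dsimp only
    split_ifs <;> simp
  rw [Finset.prod_congr rfl (fun j _ => h2 j),
    Fin.prod_univ_eq_prod_range (fun j : ℕ => if j < i then n j else 1) d,
    ← Finset.prod_filter]
  congr 1
  ext j; simp; omega

theorem card_eq {d : ℕ} {n : ℕ → ℕ} (y : Vx d n) (i : ℕ) (hi : i ≤ d) :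
    (univ.filter fun w : Vx d n => delta y w = i).card = k n i := by
  rcases i with _ | i
  · have := card_le y 0 hi
    simpa [k] using this
  · have h1 := card_le y (i+1) hi
    have h0 := card_le y i (by omega)
    have hs : (univ.filter fun w : Vx d n => delta y w ≤ i+1) =
        (univ.filter fun w : Vx d n => delta y w ≤ i) ∪
        (univ.filter fun w : Vx d n => delta y w = i+1) := by
      ext w; simp; omega
    rw [hs, card_union_of_disjoint (by
      rw [disjoint_filter]; intro w _ h; omega), h0, prod_range_succ] at h1
    simp only [k, Nat.add_sub_cancel, Nat.succ_ne_zero, if_false, Nat.mul_sub, mul_one]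
    omega

theorem card_lt {d : ℕ} {n : ℕ → ℕ} (y : Vx d n) (i : ℕ) (hi : i ≤ d) :
    (univ.filter fun w : Vx d n => delta y w < i).card = ∑ r ∈ range i, k n r := by
  induction i with
  | zero => simp
  | succ i ih =>
    rw [sum_range_succ, ← ih (by omega), ← card_eq y i (by omega), ← card_union_of_disjoint]
    · congr 1; ext w; simp; omega
    · rw [disjoint_filter]; intro w _ h; omega

theorem EsME {d : ℕ} {n : ℕ → ℕ} (x₀ : Vx d n) (M : Matrix (Vx d n) (Vx d n) ℂ) (i j : ℕ)
    (y z : Vx d n) : (Es x₀ i * M * Es x₀ j) y z =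
      if delta x₀ y = i ∧ delta x₀ z = j then M y z else 0 := by
  have e : ∀ i, Es x₀ i = Matrix.diagonal (fun y => if delta x₀ y = i then 1 else 0) := by
    intro i
    ext a b
    by_cases hab : a = b <;> simp [Es, Matrix.diagonal, hab]
  rw [e, e, Matrix.mul_diagonal, Matrix.diagonal_mul]
  by_cases h1 : delta x₀ y = i <;> by_cases h2 : delta x₀ z = j <;> simp [h1, h2]

theorem G_app {d : ℕ} {n : ℕ → ℕ} (x₀ : Vx d n) (i j : ℕ) (y z : Vx d n) :
    G x₀ i j y z = if delta x₀ y = i ∧ delta x₀ z = j then ((k n j : ℂ))⁻¹ else 0 := by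
  have := dl_iso x₀ y z
  unfold G
  split_ifs with h1 h2 h3 h4 h5 <;>
    simp only [Matrix.smul_apply, EsME, smul_eq_mul, A, Jm, Matrix.of_apply]
  · rw [if_pos h2, if_pos (by omega), mul_one]
  · rw [if_neg h2, mul_zero]
  · rw [if_pos h4, if_pos (by omega), mul_one]
  · rw [if_neg h4, mul_zero]
  · obtain rfl : i = j := by omega
    rw [if_pos h5, mul_one]
  · obtain rfl : i = j := by omega
    rw [if_neg h5, mul_zero]

theorem AG_app {d : ℕ} {n : ℕ → ℕ} (x₀ : Vx d n) (h i j : ℕ) (y z : Vx d n) :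
    (A d n h * G x₀ i j) y z =
      ((univ.filter fun w : Vx d n => delta y w = h ∧ delta x₀ w = i).card : ℂ) *
        (if delta x₀ z = j then ((k n j : ℂ))⁻¹ else 0) := by
  rw [Matrix.mul_apply, card_filter, Nat.cast_sum, sum_mul]
  refine sum_congr rfl fun w _ => ?_
  rw [G_app]
  by_cases h1 : delta y w = h <;> by_cases h2 : delta x₀ w = i <;> simp [A, h1, h2]

theorem G_app' {d : ℕ} {n : ℕ → ℕ} (x₀ : Vx d n) (i j : ℕ) (y z : Vx d n) :
    G x₀ i j y z = (if delta x₀ y = i then 1 else 0) *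
      (if delta x₀ z = j then ((k n j : ℂ))⁻¹ else 0) := by
  rw [G_app]
  by_cases h1 : delta x₀ y = i <;> by_cases h2 : delta x₀ z = j <;> simp [h1, h2]

/-- `A h * G i j = k h • G i j` if `h < i`;
`A i * G i j = k i • (G 0 j + ⋯ + G (i-1) j) + (k i - (k 0 + ⋯ + k (i-1))) • G i j`;
and `A h * G i j = k i • G h j` if `h > i`. -/
theorem stmt17 (d : ℕ) (hd : 1 ≤ d) (n : ℕ → ℕ) (hn : ∀ i < d, 2 ≤ n i)
    (x₀ : Vx d n) (i j h : ℕ) (hi : i ≤ d) (hj : j ≤ d) (hh : h ≤ d) :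
    (h < i → A d n h * G x₀ i j = (k n h : ℂ) • G x₀ i j) ∧
    (h = i → A d n h * G x₀ i j
        = (k n i : ℂ) • (∑ r ∈ Finset.range i, G x₀ r j)
          + ((k n i : ℂ) - ∑ r ∈ Finset.range i, (k n r : ℂ)) • G x₀ i j) ∧
    (h > i → A d n h * G x₀ i j = (k n i : ℂ) • G x₀ h j) := by
  refine ⟨fun hlt => ?_, fun heq => ?_, fun hgt => ?_⟩
  · ext y z
    rw [AG_app, Matrix.smul_apply, G_app', smul_eq_mul, ← mul_assoc]
    congr 1
    split_ifs with hp
    · rw [mul_one, ← card_eq y h hh]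
      congr 2; ext w
      have := dl_iso x₀ y w
      simp; omega
    · rw [mul_zero, Nat.cast_eq_zero, card_eq_zero, filter_eq_empty_iff]
      intro w _
      have := dl_iso x₀ y w
      omega
  · subst heq
    ext y z
    rw [AG_app, Matrix.add_apply, Matrix.smul_apply, Matrix.smul_apply, Matrix.sum_apply]
    simp only [G_app', smul_eq_mul]
    rw [← sum_mul, ← mul_assoc, ← mul_assoc, ← add_mul]
    congr 1
    rw [sum_ite_eq, ← Nat.cast_sum]
    rcases lt_trichotomy (delta x₀ y) h with hp | hp | hp
    · rw [if_pos (by simpa using hp), if_neg (by omega), mul_one, mul_zero, add_zero,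
        ← card_eq x₀ h hh]
      congr 2; ext w
      have := dl_iso x₀ y w
      simp; omega
    · rw [if_neg (by simp; omega), if_pos hp, mul_one, mul_zero, zero_add, eq_sub_iff_add_eq,
        ← Nat.cast_add, ← card_lt x₀ h hh, ← card_eq y h hh, ← card_union_of_disjoint]
      · congr 2; ext w
        have := dl_iso x₀ y w
        simp; omega
      · rw [disjoint_filter]; intro w _ h; omega
    · rw [if_neg (by simp; omega), if_neg (by omega), mul_zero, mul_zero, add_zero,
        Nat.cast_eq_zero, card_eq_zero, filter_eq_empty_iff]
      intro w _
      have := dl_iso x₀ y w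
      omega
  · ext y z
    rw [AG_app, Matrix.smul_apply, G_app', smul_eq_mul, ← mul_assoc]
    congr 1
    split_ifs with hp
    · rw [mul_one, ← card_eq x₀ i hi]
      congr 2; ext w
      have := dl_iso x₀ y w
      simp; omega
    · rw [mul_zero, Nat.cast_eq_zero, card_eq_zero, filter_eq_empty_iff]
      intro w _
      have := dl_iso x₀ y w
      omega
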